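/- For k = 1, …, M (with M ≥ 1), let Q^(k) be the optimal Q-function for reward r^(k). If Q̃ is the optimal Q-function for the OR-composite reward (s,a) ↦ max_{1≤k≤M} r^(k)(s,a), then for all (s,a): Q̃(s,a) ≥ max_{1≤k≤M} Q^(k)(s,a). -/

import Mathlib

/-!
A comparison principle for the Bellman optimality operator: it is monotone and shifts by `γ * D`
when its argument is shifted by a constant `D`. Fix a primitive task `k` and let `D` be the largest
value of `Q k - Qt` over state-action pairs, attained at `(s₀, a₀)`. Since `r k` is at most the
composite reward, subtracting the two Bellman equations at `(s₀, a₀)` gives `D ≤ γ * D`, and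
`γ < 1` forces `D ≤ 0`.
-/

open Finset

/-- Maximum of a real-valued function over a nonempty finite (index or action) set. -/
noncomputable def amax {A : Type*} [Fintype A] [Nonempty A] (g : A → ℝ) : ℝ :=
  Finset.univ.sup' Finset.univ_nonempty g

theorem le_amax {A : Type*} [Fintype A] [Nonempty A] (g : A → ℝ) (a : A) : g a ≤ amax g :=
  Finset.le_sup' g (Finset.mem_univ a)

theorem amax_le {A : Type*} [Fintype A] [Nonempty A] {g : A → ℝ} {c : ℝ} (h : ∀ a, g a ≤ c) :
    amax g ≤ c :=
  Finset.sup'_le _ _ fun a _ => h a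

/-- **OR composition, standard RL:** the optimal Q-function of the max-composite reward
dominates the max of the primitive optimal Q-functions. -/
theorem or_composition_standard_rl
    {S A : Type*} [Fintype S] [Fintype A] [Nonempty S] [Nonempty A]
    (p : S → A → S → ℝ)
    (hp_nonneg : ∀ s a s', 0 ≤ p s a s')
    (hp_sum : ∀ s a, ∑ s', p s a s' = 1)
    (γ : ℝ) (hγ0 : 0 < γ) (hγ1 : γ < 1)
    (M : ℕ) [NeZero M]
    (r : Fin M → S → A → ℝ)
    -- Q k is the optimal Q-function for reward r k
    (Q : Fin M → S → A → ℝ)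
    (hQ : ∀ k s a, Q k s a = r k s a + γ * ∑ s', p s a s' * amax (fun a' => Q k s' a'))
    -- Q̃ is the optimal Q-function for the OR-composite reward
    (Qt : S → A → ℝ)
    (hQt : ∀ s a, Qt s a = amax (fun k => r k s a)
      + γ * ∑ s', p s a s' * amax (fun a' => Qt s' a')) :
    ∀ s a, amax (fun k => Q k s a) ≤ Qt s a := by
  intro s a
  refine amax_le fun k => ?_
  obtain ⟨⟨s₀, a₀⟩, hmax⟩ := Finite.exists_max (fun x : S × A => Q k x.1 x.2 - Qt x.1 x.2)
  set D := Q k s₀ a₀ - Qt s₀ a₀ with hD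
  have hle : ∀ s' a', Q k s' a' ≤ Qt s' a' + D := fun s' a' => by
    have h : Q k s' a' - Qt s' a' ≤ D := hmax (s', a')
    linarith
  have hV : ∀ s', amax (fun a' => Q k s' a') ≤ amax (fun a' => Qt s' a') + D := fun s' =>
    amax_le fun a' => (hle s' a').trans (by linarith [le_amax (fun a' => Qt s' a') a'])
  have hsum : ∑ s', p s₀ a₀ s' * amax (fun a' => Q k s' a')
      ≤ ∑ s', p s₀ a₀ s' * amax (fun a' => Qt s' a') + D := by
    calc ∑ s', p s₀ a₀ s' * amax (fun a' => Q k s' a')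
        ≤ ∑ s', p s₀ a₀ s' * (amax (fun a' => Qt s' a') + D) :=
          Finset.sum_le_sum fun s' _ => mul_le_mul_of_nonneg_left (hV s') (hp_nonneg s₀ a₀ s')
      _ = ∑ s', p s₀ a₀ s' * amax (fun a' => Qt s' a') + D := by
          simp only [mul_add, Finset.sum_add_distrib, ← Finset.sum_mul, hp_sum, one_mul]
  have hcontr : D ≤ γ * D := by
    have hr := le_amax (fun k => r k s₀ a₀) k
    have hγ := mul_le_mul_of_nonneg_left hsum hγ0.le
    have h₁ := hQ k s₀ a₀
    have h₂ := hQt s₀ a₀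
    rw [mul_add] at hγ
    linarith
  have hD0 : D ≤ 0 := by
    by_contra! hpos
    nlinarith
  linarith [hle s a]
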